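/- arXiv:2411.09649 — 2 statements merged into one kernel-verified Lean document; each statement's English description precedes it below -/
import Mathlib

section
/- Let S³ denote the unit sphere in ℝ⁴ (as a topological subspace of EuclideanSpace ℝ (Fin 4)) and let F ⊂ S³ be a finite set. Then the complement S³ ∖ F, with the subspace topology, is simply connected. -/
/-!
Radial projection `v ↦ v / ‖v‖` exhibits `S³ ∖ F` as a retract of the open set `U ⊆ ℝ⁴` obtained by
removing the origin and the closed rays through the points of `F`, so it is enough that `U` is
simply connected. The complement of `U` lies in a finite union of linear subspaces of dimension at
most one, and this is all that is used about `U`.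

The reason is general position. A path `γ` in `U` is cut into finitely many pieces, each contained
in a ball inside `U`. For a piece from `x` to `y` and a vector `a` outside the (at most
three-dimensional, hence proper) subspaces `span {x, y, f}`, the triangle with vertices `x, y, a`
stays in `U`, because a point of it off the edge `[x, y]` and on the line `ℝ f` would put `a` in
`span {x, y, f}`. Hence the piece is homotopic in `U` to the broken line `x → a → y`, and
concatenating the pieces (consecutive ones cancel along a common segment), so is `γ`
(`isConeable_path`). Since a real vector space is not a finite union of proper subspaces, one apex
`a` serves two given paths from `x` to `y` simultaneously, and both are homotopic to the same broken
line (`simplyConnectedSpace_of_compl_subset_lines`).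
-/

open Set unitInterval

section GeneralPosition

variable {V : Type*} [NormedAddCommGroup V] [NormedSpace ℝ V]

/-- The straight path from `x` to `y`, as a path in a set `U` containing the segment `[x, y]`. -/
def segIn {U : Set V} (x y : U) (h : segment ℝ (x : V) y ⊆ U) : Path x y where
  toFun t := ⟨Path.segment (x : V) y t, h (by
    rw [segment_eq_image_lineMap]
    exact ⟨t, t.2, rfl⟩)⟩
  continuous_toFun := by fun_prop
  source' := by simp
  target' := by simp

lemma segIn_mem {U : Set V} {x y : U} (h : segment ℝ (x : V) y ⊆ U) {C : Set V}
    (hC : Convex ℝ C) (hx : (x : V) ∈ C) (hy : (y : V) ∈ C) (t : I) :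
    (segIn x y h t : V) ∈ C := by
  apply hC.segment_subset hx hy
  rw [segment_eq_image_lineMap]
  exact ⟨t, t.2, rfl⟩

/-- Paths in `U` with the same endpoints whose images lie in a convex subset of `U` are homotopic,
by the straight-line homotopy. -/
lemma homotopic_of_convex {U C : Set V} (hC : Convex ℝ C) (hCU : C ⊆ U) {x y : U} (p q : Path x y)
    (hp : ∀ t, (p t : V) ∈ C) (hq : ∀ t, (q t : V) ∈ C) : p.Homotopic q := by
  refine ⟨{ toFun := fun s => ⟨AffineMap.lineMap (p s.2 : V) (q s.2 : V) (s.1 : ℝ), ?_⟩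
            continuous_toFun := ?_
            map_zero_left := ?_
            map_one_left := ?_
            prop' := ?_ }⟩
  · apply hCU
    apply hC.segment_subset (hp s.2) (hq s.2)
    rw [segment_eq_image_lineMap]
    exact ⟨s.1, s.1.2, rfl⟩
  · apply Continuous.subtype_mk
    simp only [AffineMap.lineMap_apply]
    fun_prop
  · intro t; simp
  · intro t; simp
  · rintro t s (rfl | rfl) <;> simp

/-- A path `γ` in `U` from `x` to `y` is coneable if for all vectors `a` outside finitely many proper
linear subspaces, the segments `[x, a]` and `[y, a]` lie in `U` and `γ` is homotopic in `U` to the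
broken line `x → a → y`. -/
def IsConeable {U : Set V} {x y : U} (γ : Path x y) : Prop :=
  ∃ T : Finset (Subspace ℝ V), ⊤ ∉ T ∧ ∀ a : V, (∀ p ∈ T, a ∉ p) →
    ∃ (ha : a ∈ U) (hx : segment ℝ (x : V) a ⊆ U) (hy : segment ℝ (y : V) a ⊆ U),
      γ.Homotopic ((segIn x ⟨a, ha⟩ hx).trans (segIn y ⟨a, ha⟩ hy).symm)

lemma IsConeable.congr {U : Set V} {x y : U} {γ γ' : Path x y} (h : IsConeable γ)
    (hγ : γ'.Homotopic γ) : IsConeable γ' := by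
  obtain ⟨T, hT, h⟩ := h
  refine ⟨T, hT, fun a ha => ?_⟩
  obtain ⟨h1, h2, h3, hcone₁⟩ := h a ha
  exact ⟨h1, h2, h3, hγ.trans hcone₁⟩

lemma IsConeable.of_cast {U : Set V} {x y x' y' : U} {γ : Path x y} (hx : x' = x) (hy : y' = y)
    (h : IsConeable (γ.cast hx hy)) : IsConeable γ := by
  subst hx hy
  exact h

lemma IsConeable.trans {U : Set V} {x y z : U} {γ : Path x y} {γ' : Path y z}
    (h : IsConeable γ) (h' : IsConeable γ') : IsConeable (γ.trans γ') := by
  classical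
  obtain ⟨T, hT, h⟩ := h
  obtain ⟨T', hT', h'⟩ := h'
  refine ⟨T ∪ T', by simp [hT, hT'], fun a ha => ?_⟩
  obtain ⟨h1, hx, hy, hcone₁⟩ := h a fun p hp => ha p (Finset.mem_union_left _ hp)
  obtain ⟨_, _, hz, hcone₂⟩ := h' a fun p hp => ha p (Finset.mem_union_right _ hp)
  refine ⟨h1, hx, hz, ?_⟩
  rw [← Path.Homotopic.Quotient.eq] at hcone₁ hcone₂ ⊢
  simp only [Path.Homotopic.Quotient.mk_trans, Path.Homotopic.Quotient.mk_symm] at hcone₁ hcone₂ ⊢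
  rw [hcone₁, hcone₂]
  -- the middle part `a → y → a` cancels
  generalize Path.Homotopic.Quotient.mk (segIn x ⟨a, h1⟩ hx) = P
  generalize Path.Homotopic.Quotient.mk (segIn y ⟨a, h1⟩ hy) = Q
  generalize Path.Homotopic.Quotient.mk (segIn z ⟨a, h1⟩ hz) = R
  simp only [Path.Homotopic.Quotient.trans_assoc]
  rw [← Path.Homotopic.Quotient.trans_assoc Q.symm]
  simp

lemma span_triple_ne_top (hV : 3 < Module.finrank ℝ V) (x y f : V) :
    Submodule.span ℝ {x, y, f} ≠ ⊤ := by
  classical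
  intro h
  have h1 := finrank_span_finset_le_card (R := ℝ) ({x, y, f} : Finset V)
  have h2 : ({x, y, f} : Finset V).card ≤ 3 := Finset.card_le_three
  rw [Set.finrank, Finset.coe_insert, Finset.coe_insert, Finset.coe_singleton, h, finrank_top] at h1
  omega

variable {U : Set V} {G : Finset V}

/-- The triangle with base `[x, y] ⊆ U` and apex in general position lies in `U`. -/
lemma triangle_subset (hG : Uᶜ ⊆ ⋃ f ∈ G, (Submodule.span ℝ {f} : Set V)) {x y a : V}
    (hxy : segment ℝ x y ⊆ U) (ha : ∀ f ∈ G, a ∉ Submodule.span ℝ {x, y, f}) :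
    convexHull ℝ {a, x, y} ⊆ U := by
  rw [convexHull_insert (by simp), convexHull_pair]
  intro w hw
  obtain ⟨a', ha', z, hz, b, c, hb, hc, hbc, rfl⟩ := mem_convexJoin.1 hw
  obtain rfl : a = a' := (mem_singleton_iff.1 ha').symm
  rcases eq_or_ne b 0 with rfl | hb0
  · have : c = 1 := by linarith
    simpa [this] using hxy hz
  · by_contra hw
    have := hG hw
    simp only [mem_iUnion, SetLike.mem_coe] at this
    obtain ⟨f, hf, hwf⟩ := this
    apply ha f hf
    have hz' : z ∈ Submodule.span ℝ {x, y, f} :=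
      (Submodule.span ℝ {x, y, f}).convex.segment_subset
        (Submodule.subset_span (by simp)) (Submodule.subset_span (by simp)) hz
    have hw' : b • a + c • z ∈ Submodule.span ℝ {x, y, f} :=
      Submodule.span_mono (by simp) hwf
    rw [Submodule.add_mem_iff_left _ (Submodule.smul_mem _ _ hz')] at hw'
    exact (Submodule.smul_mem_iff _ hb0).1 hw'

lemma isConeable_of_convex (hV : 3 < Module.finrank ℝ V)
    (hG : Uᶜ ⊆ ⋃ f ∈ G, (Submodule.span ℝ {f} : Set V)) {C : Set V} (hC : Convex ℝ C)
    (hCU : C ⊆ U) {x y : U} (γ : Path x y) (hγ : ∀ t, (γ t : V) ∈ C) : IsConeable γ := by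
  classical
  have hx : (x : V) ∈ C := by simpa using hγ 0
  have hy : (y : V) ∈ C := by simpa using hγ 1
  have hxy : segment ℝ (x : V) y ⊆ U := (hC.segment_subset hx hy).trans hCU
  refine ⟨G.image fun f => Submodule.span ℝ {(x : V), (y : V), f}, ?_, fun a ha => ?_⟩
  · simp only [Finset.mem_image, not_exists, not_and]
    exact fun f _ => span_triple_ne_top hV _ _ f
  · have hT := triangle_subset hG hxy fun f hf => ha _ (Finset.mem_image_of_mem _ hf)
    have hTc := convex_convexHull ℝ {a, (x : V), (y : V)}
    have hT1 : a ∈ convexHull ℝ {a, (x : V), (y : V)} := subset_convexHull _ _ (by simp)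
    have hT2 : (x : V) ∈ convexHull ℝ {a, (x : V), (y : V)} := subset_convexHull _ _ (by simp)
    have hT3 : (y : V) ∈ convexHull ℝ {a, (x : V), (y : V)} := subset_convexHull _ _ (by simp)
    have hxa := (hTc.segment_subset hT2 hT1).trans hT
    have hya := (hTc.segment_subset hT3 hT1).trans hT
    refine ⟨hT hT1, hxa, hya, ?_⟩
    refine (homotopic_of_convex hC hCU γ (segIn x y hxy) hγ (segIn_mem _ hC hx hy)).trans
      (homotopic_of_convex hTc hT _ _ (segIn_mem _ hTc hT2 hT3) fun t => ?_)
    rw [Path.trans_apply]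
    split_ifs
    · exact segIn_mem hxa hTc hT2 hT1 _
    · exact segIn_mem (y := ⟨a, hT hT1⟩) hya hTc hT3 hT1 _

/-- Every path in `U` is coneable: a sufficiently fine subdivision has all its pieces in balls. -/
lemma isConeable_path (hV : 3 < Module.finrank ℝ V) (hU : IsOpen U)
    (hG : Uᶜ ⊆ ⋃ f ∈ G, (Submodule.span ℝ {f} : Set V)) {x y : U} (γ : Path x y) :
    IsConeable γ := by
  have hball : ∀ s : I, ∃ r > 0, Metric.ball (γ s : V) r ⊆ U := fun s =>
    Metric.isOpen_iff.1 hU _ (γ s).2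
  choose r hr hrU using hball
  obtain ⟨t, ht0, htm, ⟨n, hn⟩, htc⟩ := exists_monotone_Icc_subset_open_cover_unitInterval
    (c := fun s : I => (fun u : I => (γ u : V)) ⁻¹' Metric.ball (γ s : V) (r s))
    (fun s => Metric.isOpen_ball.preimage (by fun_prop))
    (fun s _ => mem_iUnion.2 ⟨s, Metric.mem_ball_self (hr s)⟩)
  have key : ∀ k, IsConeable (γ.subpath (t 0) (t k)) := by
    intro k
    induction k with
    | zero =>
      refine isConeable_of_convex hV hG (convex_ball _ _) (hrU (t 0)) _ fun s => ?_
      simpa using hr (t 0)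
    | succ k ih =>
      refine (ih.trans ?_).congr
        (Path.Homotopic.symm ⟨Path.Homotopy.subpathTransSubpath γ (t 0) (t k) (t (k + 1))⟩)
      obtain ⟨i, hi⟩ := htc k
      refine isConeable_of_convex hV hG (convex_ball _ _) (hrU i) _ fun s => ?_
      have hs : γ.subpath (t k) (t (k + 1)) s ∈ γ '' Icc (t k) (t (k + 1)) := by
        rw [← Path.range_subpath_of_le γ _ _ (htm k.le_succ)]
        exact mem_range_self s
      obtain ⟨u, hu, hus⟩ := hs
      rw [← hus]
      exact hi hu
  have h := key n
  rw [hn n le_rfl, ht0, Path.subpath_zero_one] at h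
  exact h.of_cast

/-- In dimension at least four, an open set whose complement is covered by finitely many subspaces
of dimension at most one is simply connected. -/
theorem simplyConnectedSpace_of_compl_subset_lines (hV : 3 < Module.finrank ℝ V) (hU : IsOpen U)
    (hG : Uᶜ ⊆ ⋃ f ∈ G, (Submodule.span ℝ {f} : Set V)) : SimplyConnectedSpace U := by
  classical
  -- a common apex for two paths
  have apex : ∀ {x y x' y' : U} (γ : Path x y) (γ' : Path x' y'), ∃ (a : V) (ha : a ∈ U)
      (hx : segment ℝ (x : V) a ⊆ U) (hy : segment ℝ (y : V) a ⊆ U)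
      (hx' : segment ℝ (x' : V) a ⊆ U) (hy' : segment ℝ (y' : V) a ⊆ U),
      γ.Homotopic ((segIn x ⟨a, ha⟩ hx).trans (segIn y ⟨a, ha⟩ hy).symm) ∧
      γ'.Homotopic ((segIn x' ⟨a, ha⟩ hx').trans (segIn y' ⟨a, ha⟩ hy').symm) := by
    intro x y x' y' γ γ'
    obtain ⟨T, hT, h⟩ := isConeable_path hV hU hG γ
    obtain ⟨T', hT', h'⟩ := isConeable_path hV hU hG γ'
    have hne := Subspace.biUnion_ne_univ_of_top_notMem (s := T ∪ T') (by simp [hT, hT'])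
    obtain ⟨a, ha⟩ := (Set.ne_univ_iff_exists_notMem _).1 hne
    simp only [mem_iUnion, not_exists, SetLike.mem_coe] at ha
    obtain ⟨h1, hx, hy, hcone₁⟩ := h a fun p hp => ha p (Finset.mem_union_left _ hp)
    obtain ⟨_, hx', hy', hcone₂⟩ := h' a fun p hp => ha p (Finset.mem_union_right _ hp)
    exact ⟨a, h1, hx, hy, hx', hy', hcone₁, hcone₂⟩
  rw [simply_connected_iff_paths_homotopic']
  refine ⟨⟨?_, fun x y => ?_⟩, fun {x y} p q => ?_⟩
  · have hne := Subspace.biUnion_ne_univ_of_top_notMem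
      (s := G.image fun f => Submodule.span ℝ {(0 : V), 0, f}) (by
        simp only [Finset.mem_image, not_exists, not_and]
        exact fun f _ => span_triple_ne_top hV _ _ f)
    obtain ⟨a, ha⟩ := (Set.ne_univ_iff_exists_notMem _).1 hne
    refine ⟨a, ?_⟩
    by_contra hw
    have := hG hw
    simp only [mem_iUnion, SetLike.mem_coe] at this
    obtain ⟨f, hf, hwf⟩ := this
    apply ha
    simp only [mem_iUnion, SetLike.mem_coe]
    exact ⟨_, Finset.mem_image_of_mem _ hf, Submodule.span_mono (by simp) hwf⟩
  · obtain ⟨a, ha, hx, _, hy, _⟩ := apex (Path.refl x) (Path.refl y)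
    exact ⟨(segIn x ⟨a, ha⟩ hx).trans (segIn y ⟨a, ha⟩ hy).symm⟩
  · obtain ⟨a, ha, hx, hy, _, _, h, h'⟩ := apex p q
    exact h.trans h'.symm

end GeneralPosition

lemma simplyConnectedSpace_of_retract {X Y : Type*} [TopologicalSpace X] [TopologicalSpace Y]
    [SimplyConnectedSpace Y] (i : C(X, Y)) (r : C(Y, X)) (h : ∀ x, r (i x) = x) :
    SimplyConnectedSpace X := by
  rw [simply_connected_iff_paths_homotopic']
  constructor
  · exact (show Function.Surjective r from fun x => ⟨i x, h x⟩).pathConnectedSpace r.continuous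
  · intro x y p q
    have H := (SimplyConnectedSpace.paths_homotopic (p.map i.continuous) (q.map i.continuous)).map r
    have H' := H.pathCast (h x).symm (h y).symm
    convert H' using 1 <;> ext t <;> simp [h]

/-- The complement of a finite subset of `S³` is simply connected. -/
theorem sphere_compl_finite_simplyConnected
    (F : Set (Metric.sphere (0 : EuclideanSpace ℝ (Fin 4)) 1)) (hF : F.Finite) :
    SimplyConnectedSpace ↥(Fᶜ) := by
  classical
  -- `‖v‖⁻¹ • v ∉ F` in the form `v ≠ ‖v‖ • f`, which is visibly an open condition
  let U : Set (EuclideanSpace ℝ (Fin 4)) := {v | v ≠ 0} ∩ ⋂ f ∈ F, {v | v ≠ ‖v‖ • f.1}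
  have hU : IsOpen U := by
    refine isOpen_ne.inter (hF.isOpen_biInter fun f _ => ?_)
    exact isOpen_ne_fun continuous_id (by fun_prop)
  -- the vector `0` is included to cover the origin when `F` is empty
  let G : Finset (EuclideanSpace ℝ (Fin 4)) := insert 0 (hF.toFinset.image Subtype.val)
  have hG : Uᶜ ⊆ ⋃ f ∈ G, (Submodule.span ℝ {f} : Set (EuclideanSpace ℝ (Fin 4))) := by
    intro v hv
    simp only [mem_iUnion, SetLike.mem_coe]
    by_cases h0 : v = 0
    · exact ⟨0, by simp [G], by simp [h0]⟩
    · have : ∃ f ∈ F, v = ‖v‖ • f.1 := by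
        by_contra! h
        exact hv ⟨h0, mem_iInter₂.2 h⟩
      obtain ⟨f, hf, hvf⟩ := this
      refine ⟨f.1, Finset.mem_insert_of_mem (Finset.mem_image_of_mem _ (by simpa using hf)), ?_⟩
      exact Submodule.mem_span_singleton.2 ⟨‖v‖, hvf.symm⟩
  have hSC : SimplyConnectedSpace U :=
    simplyConnectedSpace_of_compl_subset_lines (by simp) hU hG
  have hnorm : ∀ x : Metric.sphere (0 : EuclideanSpace ℝ (Fin 4)) 1, ‖x.1‖ = 1 := fun x => by simp
  let i : C(↥(Fᶜ), U) :=
    { toFun := fun x => ⟨x.1.1, by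
        refine ⟨?_, mem_iInter₂.2 fun f hf h => ?_⟩
        · exact fun h => by simpa [h] using hnorm x.1
        · rw [hnorm, one_smul] at h
          exact x.2 (Subtype.ext h ▸ hf)⟩
      continuous_toFun := by fun_prop }
  let r : C(U, ↥(Fᶜ)) :=
    { toFun := fun v => ⟨⟨‖v.1‖⁻¹ • v.1, by
          have : ‖v.1‖ ≠ 0 := norm_ne_zero_iff.2 v.2.1
          simp [norm_smul, this]⟩, fun h => by
          have h0 : ‖v.1‖ ≠ 0 := norm_ne_zero_iff.2 v.2.1
          exact mem_iInter₂.1 v.2.2 _ h (by simp [smul_smul, h0])⟩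
      continuous_toFun := by
        refine Continuous.subtype_mk (Continuous.subtype_mk ?_ _) _
        exact Continuous.smul (continuous_subtype_val.norm.inv₀ fun v => norm_ne_zero_iff.2 v.2.1)
          continuous_subtype_val }
  refine simplyConnectedSpace_of_retract i r fun x => ?_
  apply Subtype.ext
  apply Subtype.ext
  simp [i, r]
end

section
/- Let S³ denote the unit sphere in ℝ⁴, let F, F' ⊂ S³ be finite sets, and let φ : S³ ∖ F' → S³ ∖ F be a covering map (with both spaces carrying the subspace topology). Then φ is injective, hence a homeomorphism. (This is the topological argument behind the conjecture that no smooth map S³ → S³ of degree greater than 1 can have finite critical set.) -/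
/-!
A covering map with connected total space is injective as soon as it has a continuous section `s`
through one point `e` of the total space: `s ∘ φ` and the identity are two lifts of `φ` that agree
at `e`, so they are equal. It remains to see that `F'ᶜ` is connected and that coverings of `Fᶜ`
have sections, which amounts to the simple connectedness of `S³` minus a finite set.

Rather than computing fundamental groups, the proof works with the property `LiftsOver φ g U` that
`g` lifts along `φ` over `U`, with a prescribed value at any point. It holds when `U` is open and
simply connected (lifting criterion), and it passes from two open sets with connected nonempty
intersection to their union (`LiftsOver.union`: the two lifts glue by uniqueness of lifts).
This is used twice.

* In a three-dimensional Euclidean space with a finite subset `G`, choose a unit vector `v` that is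
  not parallel to any difference of two points of `G`. The complement of the rays `f + t • v`,
  `f ∈ G`, `t ≥ 0`, is contractible: flow in the direction `-v` into a half-space lying below `G`.
  The same holds for `-v`; these two open sets cover the complement of `G`, and their intersection,
  the complement of finitely many parallel lines, is the product of a line and a plane minus
  finitely many points.
* In `S³`, for two points `a ≠ b`, the set `Fᶜ` is covered by `Fᶜ ∖ {a}` and `Fᶜ ∖ {b}`, each of
  which is identified with the complement of a finite set in `ℝ³` by stereographic projection.
-/

open Set Module
open scoped InnerProductSpace

/-! ### Lifting over subsets -/

section Lifts

variable {X Y E S : Type*} [TopologicalSpace X] [TopologicalSpace Y] [TopologicalSpace E]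
  {A : Set S} {φ : E → A}

/-- Every partial lift of `g` along `φ` at a point of `U` extends to a continuous lift over `U`.
The maps `g` and its lifts are total functions whose values outside `U` are irrelevant, and `g`
takes values in the ambient space `S` of the base `A`. -/
def LiftsOver (φ : E → A) (g : X → S) (U : Set X) : Prop :=
  ∀ x₀ ∈ U, ∀ e, (φ e : S) = g x₀ →
    ∃ s : X → E, ContinuousOn s U ∧ (∀ x ∈ U, (φ (s x) : S) = g x) ∧ s x₀ = e

lemma LiftsOver.comp {g : X → S} {U : Set X} (l : LiftsOver φ g U) {h : Y → X} {V : Set Y}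
    (hh : ContinuousOn h V) (hVU : MapsTo h V U) {g' : Y → S} (hg' : EqOn (g ∘ h) g' V) :
    LiftsOver φ g' V := by
  intro y₀ hy₀ e he
  obtain ⟨s, hs, hsg, hse⟩ := l (h y₀) (hVU hy₀) e (he.trans (hg' hy₀).symm)
  exact ⟨s ∘ h, hs.comp hh hVU, fun y hy ↦ (hsg _ (hVU hy)).trans (hg' hy), hse⟩

variable [TopologicalSpace S]

lemma liftsOver_of_simplyConnected [LocallyPathConnectedSpace X] (hφ : IsCoveringMap φ)
    {g : X → S} {U : Set X} (hU : IsOpen U) [SimplyConnectedSpace U] (hg : ContinuousOn g U)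
    (hgA : MapsTo g U A) : LiftsOver φ g U := by
  classical
  intro x₀ hx₀ e he
  have : LocallyPathConnectedSpace U := hU.locallyPathConnectedSpace
  let f : C(U, A) := ⟨hgA.restrict, hg.mapsToRestrict hgA⟩
  obtain ⟨s, ⟨hs₀, hs⟩, -⟩ := hφ.existsUnique_continuousMap_lifts f ⟨x₀, hx₀⟩ e (Subtype.ext he)
  refine ⟨fun x ↦ if h : x ∈ U then s ⟨x, h⟩ else e, ?_, fun x hx ↦ ?_, by simp [hx₀, hs₀]⟩
  · rw [continuousOn_iff_continuous_domRestrict]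
    convert s.continuous using 1
    ext x
    simp
  · simpa [hx, f] using congrArg Subtype.val (congrFun hs ⟨x, hx⟩)

/-- The case of `LiftsOver.union` in which the base point lies in the first set. -/
lemma LiftsOver.union_aux (hφ : IsCoveringMap φ) {g : X → S} {U V : Set X}
    (hU : IsOpen U) (hV : IsOpen V) (hUV : IsConnected (U ∩ V))
    (lU : LiftsOver φ g U) (lV : LiftsOver φ g V) {x₀ : X} (hx₀ : x₀ ∈ U) {e : E}
    (he : (φ e : S) = g x₀) :
    ∃ s : X → E, ContinuousOn s (U ∪ V) ∧ (∀ x ∈ U ∪ V, (φ (s x) : S) = g x) ∧ s x₀ = e := by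
  classical
  obtain ⟨s, hs, hsg, rfl⟩ := lU x₀ hx₀ e he
  obtain ⟨y, hyU, hyV⟩ := hUV.nonempty
  obtain ⟨t, ht, htg, hty⟩ := lV y hyV (s y) (hsg y hyU)
  have hst : EqOn s t (U ∩ V) := hφ.eqOn_of_comp_eqOn hUV.isPreconnected
    (hs.mono inter_subset_left) (ht.mono inter_subset_right)
    (fun x hx ↦ Subtype.ext ((hsg x hx.1).trans (htg x hx.2).symm)) ⟨hyU, hyV⟩ hty.symm
  have hrU : EqOn (U.piecewise s t) s U := piecewise_eqOn U s t
  have hrV : EqOn (U.piecewise s t) t V := by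
    intro x hx
    by_cases hxU : x ∈ U
    · rw [hrU hxU, hst ⟨hxU, hx⟩]
    · exact piecewise_eq_of_notMem U s t hxU
  refine ⟨U.piecewise s t, ?_, ?_, hrU hx₀⟩
  · exact (hs.congr hrU).union_of_isOpen (ht.congr hrV) hU hV
  · rintro x (hx | hx)
    · rw [hrU hx, hsg x hx]
    · rw [hrV hx, htg x hx]

lemma LiftsOver.union (hφ : IsCoveringMap φ) {g : X → S} {U V : Set X}
    (hU : IsOpen U) (hV : IsOpen V) (hUV : IsConnected (U ∩ V))
    (lU : LiftsOver φ g U) (lV : LiftsOver φ g V) : LiftsOver φ g (U ∪ V) := by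
  rintro x₀ (hx₀ | hx₀) e he
  · exact union_aux hφ hU hV hUV lU lV hx₀ he
  · rw [union_comm]
    exact union_aux hφ hV hU (inter_comm U V ▸ hUV) lV lU hx₀ he

end Lifts

/-! ### Complements of finite sets in Euclidean space -/

section Euclidean

variable {W : Type*} [NormedAddCommGroup W] [InnerProductSpace ℝ W]

/-- The complement of the union of the closed rays issuing from the points of `G` in the
direction `v`. -/
def rayCompl (v : W) (G : Set W) : Set W :=
  {x | ∀ f ∈ G, ∀ t : ℝ, 0 ≤ t → x ≠ f + t • v}

lemma isOpen_rayCompl {v : W} (hv : ‖v‖ = 1) {G : Set W} (hG : G.Finite) :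
    IsOpen (rayCompl v G) := by
  -- On the ray from `f` the parameter is `⟪v, x - f⟫`, so that the ray is defined by an equation.
  have key : rayCompl v G = ⋂ f ∈ G, {x | x = f + max 0 ⟪v, x - f⟫_ℝ • v}ᶜ := by
    ext x
    simp only [rayCompl, mem_ofPred_eq, mem_iInter, mem_compl_iff]
    refine forall₂_congr fun f _ ↦ ⟨fun h ↦ h _ (le_max_left _ _), fun h t ht hx ↦ h ?_⟩
    have : ⟪v, x - f⟫_ℝ = t := by
      rw [hx, add_sub_cancel_left, inner_smul_right, real_inner_self_eq_norm_sq, hv]; simp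
    rw [this, max_eq_right ht, ← hx]
  rw [key]
  refine hG.isOpen_biInter fun f _ ↦ (isClosed_eq continuous_id ?_).isOpen_compl
  fun_prop

lemma sub_smul_mem_rayCompl {v : W} {G : Set W} {x : W} (hx : x ∈ rayCompl v G) {t : ℝ}
    (ht : 0 ≤ t) : x - t • v ∈ rayCompl v G := by
  intro f hf r hr h
  refine hx f hf (r + t) (by positivity) ?_
  rw [add_smul, ← add_assoc, ← h, sub_add_cancel]

/-- Pushing points in the direction `-v` deforms the complement of the rays into a half-space `K`
below all of `G`, which is convex. -/
lemma contractibleSpace_rayCompl {v : W} (hv : ‖v‖ = 1) {G : Set W} (hG : G.Finite) :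
    ContractibleSpace (rayCompl v G) := by
  have hvv : ⟪v, v⟫_ℝ = 1 := by rw [real_inner_self_eq_norm_sq, hv]; simp
  obtain ⟨m, hm⟩ := (hG.image fun f ↦ ⟪v, f⟫_ℝ).bddBelow
  let K : Set W := {x | ⟪v, x⟫_ℝ ≤ m - 1}
  have hK : Convex ℝ K := convex_halfSpace_le (innerSL ℝ v).isLinear _
  have hKne : K.Nonempty := ⟨(m - 1) • v, by simp [K, inner_smul_right, hv]⟩
  have : ContractibleSpace K := hK.contractibleSpace hKne
  have hKU : K ⊆ rayCompl v G := by
    intro x hx f hf t ht h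
    have h1 : m ≤ ⟪v, f⟫_ℝ := hm ⟨f, hf, rfl⟩
    have h2 : ⟪v, x⟫_ℝ ≤ m - 1 := hx
    rw [h, inner_add_right, inner_smul_right, hvv] at h2
    linarith
  -- `d x` is the distance by which `x` has to move down to enter `K`.
  let d : W → ℝ := fun x ↦ max 0 (⟪v, x⟫_ℝ - (m - 1))
  have hd : Continuous d := by fun_prop
  have hd0 (x : W) : 0 ≤ d x := le_max_left _ _
  let i : C(K, rayCompl v G) := ⟨inclusion hKU, continuous_inclusion hKU⟩
  let r : C(rayCompl v G, K) := ⟨fun x ↦ ⟨x - d x • v, by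
    have : ⟪v, (x : W)⟫_ℝ - (m - 1) ≤ d x := le_max_right _ _
    simp only [K, mem_ofPred_eq, inner_sub_right, inner_smul_right, hvv]
    linarith⟩, by fun_prop⟩
  have hir : (ContinuousMap.id (rayCompl v G)).Homotopic (i.comp r) := by
    refine ⟨⟨⟨fun p ↦ ⟨p.2 - ((p.1 : ℝ) * d p.2) • v,
      sub_smul_mem_rayCompl p.2.2 (mul_nonneg p.1.2.1 (hd0 _))⟩, by fun_prop⟩, ?_, ?_⟩⟩
    · intro x; ext; simp
    · intro x; ext; simp [i, r]
  rw [contractible_iff_id_nullhomotopic]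
  obtain ⟨y, hy⟩ := ((id_nullhomotopic K).comp_right i).comp_left r
  exact ⟨y, hir.trans hy⟩

/-- The rays in the directions `v` and `-v` make up full lines, whose complement is the product of
`ℝ ∙ v` and the orthogonal plane minus finitely many points. -/
lemma isConnected_compl_lines [Fact (finrank ℝ W = 2 + 1)] {v : W} (hv : ‖v‖ = 1) {G : Set W}
    (hG : G.Finite) : IsConnected (rayCompl v G ∩ rayCompl (-v) G) := by
  have hvv : ⟪v, v⟫_ℝ = 1 := by rw [real_inner_self_eq_norm_sq, hv]; simp
  have hv0 : v ≠ 0 := by rintro rfl; simp at hv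
  let K : Submodule ℝ W := (ℝ ∙ v)ᗮ
  -- `T` is the orthogonal projection of `G` to the plane `K`.
  let T : Set K := {w | (w : W) ∈ (fun f ↦ f - ⟪v, f⟫_ℝ • v) '' G}
  have hT : T.Finite := (hG.image _).preimage Subtype.val_injective.injOn
  have hfin : finrank ℝ K = 2 := Submodule.finrank_orthogonal_span_singleton hv0
  have hrank : 1 < Module.rank ℝ K := by
    have : FiniteDimensional ℝ W := .of_fact_finrank_eq_succ 2
    rw [← finrank_eq_rank, hfin]; norm_num
  have hconn : IsConnected (Tᶜ ×ˢ (univ : Set ℝ)) :=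
    (hT.countable.isConnected_compl_of_one_lt_rank hrank).prod isConnected_univ
  have hc : Continuous fun p : K × ℝ ↦ (p.1 : W) + p.2 • v := by fun_prop
  convert hconn.image _ hc.continuousOn using 1
  have hlines : rayCompl v G ∩ rayCompl (-v) G = {x | ∀ f ∈ G, ∀ t : ℝ, x ≠ f + t • v} := by
    ext x
    constructor
    · rintro ⟨h1, h2⟩ f hf t
      rcases le_total 0 t with ht | ht
      · exact h1 f hf t ht
      · simpa using h2 f hf (-t) (by linarith)
    · intro h
      exact ⟨fun f hf t _ ↦ h f hf t, fun f hf t _ ↦ by simpa using h f hf (-t)⟩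
  rw [hlines]
  ext x
  constructor
  · intro hx
    refine ⟨(⟨x - ⟪v, x⟫_ℝ • v, ?_⟩, ⟪v, x⟫_ℝ), ⟨?_, mem_univ _⟩, by simp⟩
    · rw [Submodule.mem_orthogonal_singleton_iff_inner_right]
      simp [inner_sub_right, inner_smul_right, hv]
    · rintro ⟨f, hf, h⟩
      refine hx f hf (⟪v, x⟫_ℝ - ⟪v, f⟫_ℝ) ?_
      calc x = (x - ⟪v, x⟫_ℝ • v) + ⟪v, x⟫_ℝ • v := (sub_add_cancel _ _).symm
        _ = (f - ⟪v, f⟫_ℝ • v) + ⟪v, x⟫_ℝ • v := congrArg (· + ⟪v, x⟫_ℝ • v) h.symm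
        _ = f + (⟪v, x⟫_ℝ - ⟪v, f⟫_ℝ) • v := by module
  · rintro ⟨⟨w, t⟩, ⟨hw, -⟩, rfl⟩ f hf r h
    refine hw ⟨f, hf, ?_⟩
    have hwv : ⟪v, (w : W)⟫_ℝ = 0 := Submodule.mem_orthogonal_singleton_iff_inner_right.mp w.2
    have h' := congrArg (fun y ↦ ⟪v, y⟫_ℝ) h
    simp only [inner_add_right, inner_smul_right, hvv, hwv] at h'
    have : ⟪v, f⟫_ℝ = t - r := by linarith
    simp only [this]
    rw [← sub_eq_iff_eq_add.mpr h.symm]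
    module

/-- A direction that is not parallel to any line through two points of `G`. -/
lemma exists_generic_direction [Fact (finrank ℝ W = 2 + 1)] {G : Set W} (hG : G.Finite) :
    ∃ v : W, ‖v‖ = 1 ∧ ∀ f ∈ G, ∀ f' ∈ G, ∀ c : ℝ, f - f' = c • v → f = f' := by
  classical
  have hW : finrank ℝ W = 3 := Fact.out
  -- Including `⊥` guarantees a nonzero vector even when `G` is empty.
  let s : Finset (Submodule ℝ W) :=
    insert ⊥ ((hG.toFinset ×ˢ hG.toFinset).image fun p ↦ ℝ ∙ (p.1 - p.2))
  have hs : ⊤ ∉ s := by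
    intro h
    have hle : finrank ℝ (⊤ : Submodule ℝ W) ≤ 1 := by
      rcases Finset.mem_insert.mp h with h | h
      · rw [h]; simp
      · obtain ⟨p, -, hp⟩ := Finset.mem_image.mp h
        rw [← hp]
        exact (finrank_span_le_card _).trans (by simp)
    rw [finrank_top, hW] at hle
    omega
  obtain ⟨u, hu⟩ := (ne_univ_iff_exists_notMem _).mp (Subspace.biUnion_ne_univ_of_top_notMem hs)
  simp only [mem_iUnion, not_exists] at hu
  have hu0 : u ≠ 0 := fun h ↦ hu ⊥ (Finset.mem_insert_self _ _) (by simp [h])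
  refine ⟨‖u‖⁻¹ • u, by simp [norm_smul, hu0], fun f hf f' hf' c h ↦ ?_⟩
  by_contra hne
  refine hu (ℝ ∙ (f - f')) (Finset.mem_insert_of_mem (Finset.mem_image.mpr
    ⟨(f, f'), by simp [hf, hf'], rfl⟩)) ?_
  have hc : c * ‖u‖⁻¹ ≠ 0 := by
    intro h0
    rw [smul_smul, h0, zero_smul] at h
    exact hne (sub_eq_zero.mp h)
  exact Submodule.mem_span_singleton.mpr ⟨(c * ‖u‖⁻¹)⁻¹, by
    rw [h, smul_smul c, inv_smul_smul₀ hc]⟩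

lemma liftsOver_compl_finite [Fact (finrank ℝ W = 2 + 1)] {E S : Type*} [TopologicalSpace E]
    [TopologicalSpace S] {A : Set S} {φ : E → A} (hφ : IsCoveringMap φ) {G : Set W}
    (hG : G.Finite) {g : W → S} (hg : ContinuousOn g Gᶜ) (hgA : MapsTo g Gᶜ A) :
    LiftsOver φ g Gᶜ := by
  obtain ⟨v, hv, hgen⟩ := exists_generic_direction hG
  have hsub (u : W) : rayCompl u G ⊆ Gᶜ := fun x hx hxG ↦ hx x hxG 0 le_rfl (by simp)
  have hlift (u : W) (hu : ‖u‖ = 1) : LiftsOver φ g (rayCompl u G) := by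
    have := contractibleSpace_rayCompl hu hG
    exact liftsOver_of_simplyConnected hφ (isOpen_rayCompl hu hG) (hg.mono (hsub u))
      (hgA.mono_left (hsub u))
  have hv' : ‖-v‖ = 1 := by rw [norm_neg, hv]
  have hv0 : v ≠ 0 := by rintro rfl; simp at hv
  have hunion : rayCompl v G ∪ rayCompl (-v) G = Gᶜ := by
    refine (union_subset (hsub v) (hsub (-v))).antisymm fun x hx ↦ ?_
    by_contra h
    simp only [rayCompl, mem_union, mem_ofPred_eq, not_or, not_forall, not_not] at h
    obtain ⟨⟨f, hf, t, ht, h1⟩, f', hf', t', ht', h2⟩ := h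
    have hff : f = f' := by
      refine hgen f hf f' hf' (-(t + t')) ?_
      rw [← sub_eq_iff_eq_add.mpr h1, ← sub_eq_iff_eq_add.mpr h2]
      module
    -- Two opposite rays with the same origin meet only at that origin.
    have h3 : (t + t') • v = 0 := by
      rw [hff, h2] at h1
      have := add_left_cancel h1
      rw [add_smul, ← this]
      simp
    have h4 : t + t' = 0 := (smul_eq_zero.mp h3).resolve_right hv0
    have h5 : t = 0 := by linarith
    refine hx ?_
    rwa [h1, h5, zero_smul, add_zero]
  rw [← hunion]
  exact (hlift v hv).union hφ (isOpen_rayCompl hv hG) (isOpen_rayCompl hv' hG)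
    (isConnected_compl_lines hv hG) (hlift (-v) hv')

end Euclidean

/-! ### Complements of finite sets in the three-sphere -/

section Sphere

local notation "S3" => Metric.sphere (0 : EuclideanSpace ℝ (Fin 4)) 1

instance fact_finrank_four : Fact (finrank ℝ (EuclideanSpace ℝ (Fin 4)) = 3 + 1) := ⟨by simp⟩

instance fact_finrank_three : Fact (finrank ℝ (EuclideanSpace ℝ (Fin 3)) = 2 + 1) := ⟨by simp⟩

lemma finite_preimage_stereographic (a : S3) {F : Set S3} (hF : F.Finite) :
    ((stereographic' 3 a).symm ⁻¹' F).Finite := by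
  refine hF.preimage ((stereographic' 3 a).symm.injOn.mono ?_)
  simp

/-- Inverse stereographic projection from `a` maps the complement of a finite set in `ℝ³` onto this
set. -/
lemma isConnected_compl_insert (a : S3) {F : Set S3} (hF : F.Finite) :
    IsConnected (insert a F)ᶜ := by
  have hrank : 1 < Module.rank ℝ (EuclideanSpace ℝ (Fin 3)) := by
    rw [← finrank_eq_rank]; simp
  have hc : ContinuousOn (stereographic' 3 a).symm ((stereographic' 3 a).symm ⁻¹' F)ᶜ :=
    (stereographic' 3 a).continuousOn_symm.mono (by simp)
  convert ((finite_preimage_stereographic a hF).countable.isConnected_compl_of_one_lt_rank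
    hrank).image _ hc using 1
  ext x
  constructor
  · intro hx
    simp only [mem_compl_iff, mem_insert_iff, not_or] at hx
    have hxs : x ∈ (stereographic' 3 a).source := by simpa using hx.1
    have hinv := (stereographic' 3 a).left_inv hxs
    exact ⟨stereographic' 3 a x, by simpa [hinv] using hx.2, hinv⟩
  · rintro ⟨y, hy, rfl⟩
    have := (stereographic' 3 a).map_target (x := y) (by simp)
    simp only [stereographic'_source, mem_compl_iff, mem_singleton_iff] at this
    simpa [this] using hy

lemma compl_insert_union_compl_insert {α : Type*} {a b : α} (hab : a ≠ b) (F : Set α) :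
    (insert a F)ᶜ ∪ (insert b F)ᶜ = Fᶜ := by
  ext x
  simp only [mem_union, mem_compl_iff, mem_insert_iff]
  grind

lemma compl_insert_inter_compl_insert {α : Type*} (a b : α) (F : Set α) :
    (insert a F)ᶜ ∩ (insert b F)ᶜ = (insert a (insert b F))ᶜ := by
  ext x
  simp only [mem_inter_iff, mem_compl_iff, mem_insert_iff]
  tauto

lemma exists_ne_sphere : ∃ a b : S3, a ≠ b := by
  let a : S3 := ⟨EuclideanSpace.single 0 1, by simp⟩
  exact ⟨a, -a, ne_neg_of_mem_unit_sphere ℝ a⟩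

lemma isConnected_compl_finite {F : Set S3} (hF : F.Finite) : IsConnected Fᶜ := by
  obtain ⟨a, b, hab⟩ := exists_ne_sphere
  rw [← compl_insert_union_compl_insert hab F]
  refine (isConnected_compl_insert a hF).union ?_ (isConnected_compl_insert b hF)
  rw [compl_insert_inter_compl_insert]
  exact (isConnected_compl_insert a (hF.insert b)).nonempty

lemma liftsOver_compl_insert {E : Type*} [TopologicalSpace E] {F : Set S3} (hF : F.Finite)
    {φ : E → ↥(Fᶜ)} (hφ : IsCoveringMap φ) (a : S3) : LiftsOver φ id (insert a F)ᶜ := by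
  have hc : ContinuousOn (stereographic' 3 a).symm ((stereographic' 3 a).symm ⁻¹' F)ᶜ :=
    (stereographic' 3 a).continuousOn_symm.mono (by simp)
  have hsrc : (insert a F)ᶜ ⊆ (stereographic' 3 a).source := by
    rw [stereographic'_source, compl_subset_compl, singleton_subset_iff]
    exact mem_insert a F
  have hinv : EqOn ((stereographic' 3 a).symm ∘ stereographic' 3 a) id (insert a F)ᶜ :=
    fun x hx ↦ (stereographic' 3 a).left_inv (hsrc hx)
  refine (liftsOver_compl_finite hφ (finite_preimage_stereographic a hF) hc
    (fun y hy ↦ hy)).comp ((stereographic' 3 a).continuousOn.mono hsrc) (fun x hx hxF ↦ ?_) hinv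
  have h : (stereographic' 3 a).symm (stereographic' 3 a x) = x := hinv hx
  rw [mem_preimage, h] at hxF
  exact hx (mem_insert_of_mem a hxF)

lemma liftsOver_compl {E : Type*} [TopologicalSpace E] {F : Set S3} (hF : F.Finite)
    {φ : E → ↥(Fᶜ)} (hφ : IsCoveringMap φ) : LiftsOver φ id Fᶜ := by
  obtain ⟨a, b, hab⟩ := exists_ne_sphere
  have hunion : LiftsOver φ id ((insert a F)ᶜ ∪ (insert b F)ᶜ) := by
    refine (liftsOver_compl_insert hF hφ a).union hφ (hF.insert a).isClosed.isOpen_compl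
      (hF.insert b).isClosed.isOpen_compl ?_ (liftsOver_compl_insert hF hφ b)
    rw [compl_insert_inter_compl_insert]
    exact isConnected_compl_insert a (hF.insert b)
  rwa [compl_insert_union_compl_insert hab F] at hunion

end Sphere

/-- A covering map between complements of finite subsets of `S³` is injective, hence a
homeomorphism. -/
theorem covering_of_sphere_compl_injective
    (F F' : Set (Metric.sphere (0 : EuclideanSpace ℝ (Fin 4)) 1))
    (hF : F.Finite) (hF' : F'.Finite)
    (φ : ↥(F'ᶜ) → ↥(Fᶜ)) (hφ : IsCoveringMap φ) :
    Function.Injective φ ∧ IsHomeomorph φ := by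
  have hconn := isConnected_compl_finite hF'
  have : PreconnectedSpace ↥(F'ᶜ) := isPreconnected_iff_preconnectedSpace.mp hconn.isPreconnected
  obtain ⟨e₀, he₀⟩ := hconn.nonempty
  let e : ↥(F'ᶜ) := ⟨e₀, he₀⟩
  obtain ⟨s, hs, hsφ, hse⟩ := liftsOver_compl hF hφ (φ e) (φ e).2 e rfl
  have hsc : Continuous fun x : ↥(Fᶜ) ↦ s x := continuousOn_iff_continuous_domRestrict.mp hs
  have hright (x : ↥(Fᶜ)) : φ (s x) = x := Subtype.ext (hsφ x x.2)
  -- `s ∘ φ` and the identity are lifts of `φ` along itself that agree at `e`.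
  have hleft : (fun x ↦ s (φ x)) = id :=
    hφ.eq_of_comp_eq (hsc.comp hφ.continuous) continuous_id
      (funext fun x ↦ hright (φ x)) e hse
  have hinj : Function.Injective φ := fun x y hxy ↦ by
    rw [← id_eq x, ← id_eq y, ← hleft]
    exact congrArg (fun z : ↑(Fᶜ) ↦ s z) hxy
  exact ⟨hinj, hφ.continuous, hφ.isOpenMap, hinj, fun x ↦ ⟨s x, hright x⟩⟩
end
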